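/- arXiv:1207.6991 — 7 statements merged into one kernel-verified Lean document; each statement's English description precedes it below -/
import Mathlib

section
/- Let L ≥ 2 and n ≥ 2 be integers, and let b and b' be two words of length n over the alphabet {0,…,L−1} having the same bifix indicator h = h'. Then for every k ≥ 0 the probability P_k that b appears as a contiguous substring of a uniformly random word of length k equals the corresponding probability P'_k for b'. -/
/-!
Two families of words determine everything: the words of length `m` that avoid `w` (counted by
`A m`) and those that start with `w` but whose tail avoids `w` (counted by `F m`).

* Prepending a letter to an avoiding word gives `A (m+1) + F (m+1) = L * A m`
  (`card_avoid_add_card_fresh`).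
* If `u` avoids `w`, then `w ++ u` has a shortest suffix containing `w`. It is
  `w.drop (n - j) ++ u` for a unique `1 ≤ j ≤ n`, and it begins with `w`, so `j` is a bifix length
  of `w`; conversely, for a bifix length `j` every word counted by `F (m+j)` arises in this way.
  Hence `A m = ∑ F (m+j)` over the bifix lengths `j ∈ [1,n]` of `w` (`card_avoid_eq_sum`).

Since `j = n` is always a bifix length, the second identity gives `F (m+n)` in terms of `A m` and
smaller values of `F`; with `A 0 = 1` and `F m = 0` for `m < n`, both sequences are determined by
the set of bifix lengths (`card_eq_of_bifix`). The words containing `b` are the complement of the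
avoiding ones.
-/

/-- Probability that the word `b` (of length `n`, alphabet `Fin L`) appears as a
contiguous substring of a uniformly random word of length `k`. -/
noncomputable def occProb (L n k : ℕ) (b : Fin n → Fin L) : ℝ :=
  ((Finset.univ.filter
      (fun d : Fin k → Fin L => List.ofFn b <:+: List.ofFn d)).card : ℝ) / (L : ℝ) ^ k

/-- Probability that `b` occurs for the first time exactly at the end of a
uniformly random word of length `k` (i.e. `b` is a suffix and no earlier occurrence). -/
noncomputable def firstOccProb (L n k : ℕ) (b : Fin n → Fin L) : ℝ :=
  ((Finset.univ.filter
      (fun d : Fin k → Fin L =>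
         List.ofFn b <:+ List.ofFn d ∧
           ¬ (List.ofFn b <:+: (List.ofFn d).take (k - 1)))).card : ℝ) / (L : ℝ) ^ k

/-- The bifix indicator `h_i` of a word `b` of length `n`: equals `1` if the
prefix of length `i` coincides with the suffix of length `i`, else `0`. -/
def bifixInd (L n : ℕ) (b : Fin n → Fin L) (i : ℕ) : ℕ :=
  if (List.ofFn b).take i = (List.ofFn b).drop (n - i) then 1 else 0

/-- The transition matrix of the Markov chain `X(s)` on states `{0,…,n}`. -/
noncomputable def transMat (L n : ℕ) (s : ℕ → ℕ) : Matrix (Fin (n+1)) (Fin (n+1)) ℝ :=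
  fun i j =>
    if (i : ℕ) = n then (if (j : ℕ) = n then 1 else 0)
    else
      (if (j : ℕ) = (i : ℕ) + 1 then 1 / (L : ℝ) else 0) +
      (if (j : ℕ) = s i ∧ 0 < s i then 1 / (L : ℝ) else 0) +
      (if (j : ℕ) = 0 then (if 0 < s i then ((L : ℝ) - 2) / L else ((L : ℝ) - 1) / L) else 0)

/-- `P_k(i)`: probability that the chain `X(s)` started in state `i` is in state `n`
after `k` steps; the `(i, n)` entry of the `k`-th power of the transition matrix. -/
noncomputable def hitProb (L n : ℕ) (s : ℕ → ℕ) (k : ℕ) (i : Fin (n+1)) : ℝ :=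
  ((transMat L n s) ^ k) i (Fin.last n)

/-- The word `s = h̄ = (0, 1 - h_{n-1}, 1 - h_{n-2}, …, 1 - h_1)` associated to a
binary word `h = (h_1, …, h_{n-1})`. -/
def hbar (n : ℕ) (h : ℕ → ℕ) : ℕ → ℕ := fun i => if i = 0 then 0 else 1 - h (n - i)

section Words

variable {α : Type*} [Fintype α] [DecidableEq α]

/-- The finite set of all words of length `k`. -/
noncomputable def wordsOfLength (α : Type*) [Fintype α] (k : ℕ) : Finset (List α) :=
  (List.finite_length_eq α k).toFinset

lemma mem_wordsOfLength {α : Type*} [Fintype α] {k : ℕ} {l : List α} : l ∈ wordsOfLength α k ↔ l.length = k := by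
  simp [wordsOfLength]

/-- The words of length `k` that do not contain `w` as a contiguous substring. -/
noncomputable def avoidWords (w : List α) (k : ℕ) : Finset (List α) :=
  (wordsOfLength α k).filter (fun l => ¬ w <:+: l)

/-- The words of length `k` whose only occurrence of `w` is as a prefix, in the sense that the
tail avoids `w` (the mirror image of a first occurrence at the end). -/
noncomputable def freshWords (w : List α) (k : ℕ) : Finset (List α) :=
  (wordsOfLength α k).filter (fun l => w <+: l ∧ ¬ w <:+: l.tail)

lemma mem_avoidWords {w l : List α} {k : ℕ} :
    l ∈ avoidWords w k ↔ l.length = k ∧ ¬ w <:+: l := by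
  simp [avoidWords, mem_wordsOfLength]

lemma mem_freshWords {w l : List α} {k : ℕ} :
    l ∈ freshWords w k ↔ l.length = k ∧ w <+: l ∧ ¬ w <:+: l.tail := by
  simp [freshWords, mem_wordsOfLength]

lemma card_avoid_add_card_fresh (w : List α) (m : ℕ) :
    (avoidWords w (m + 1)).card + (freshWords w (m + 1)).card
      = Fintype.card α * (avoidWords w m).card := by
  have hdisj : Disjoint (avoidWords w (m + 1)) (freshWords w (m + 1)) := by
    rw [Finset.disjoint_left]
    intro l h1 h2
    exact (mem_avoidWords.1 h1).2 (mem_freshWords.1 h2).2.1.isInfix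
  rw [← Finset.card_union_of_disjoint hdisj, ← Finset.card_univ, ← Finset.card_product]
  symm
  refine Finset.card_bij (fun p _ => p.1 :: p.2) ?_ ?_ ?_
  · rintro ⟨a, l⟩ h
    have h := mem_avoidWords.1 (Finset.mem_product.1 h).2
    simp only [Finset.mem_union, mem_avoidWords, mem_freshWords, List.length_cons, List.tail_cons,
      List.infix_cons_iff]
    have h1 := h.1
    have h2 := h.2
    simp only at h1 h2
    tauto
  · rintro ⟨a, l⟩ _ ⟨a', l'⟩ _ h
    simpa using h
  · intro l h
    cases l with
    | nil => simp [mem_avoidWords, mem_freshWords] at h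
    | cons a l =>
      refine ⟨(a, l), ?_, rfl⟩
      simp only [Finset.mem_union, mem_avoidWords, mem_freshWords, List.length_cons,
        List.tail_cons, List.infix_cons_iff, add_left_inj] at h
      simp only [Finset.mem_product, Finset.mem_univ, mem_avoidWords, true_and]
      tauto

/-- Suffixes of `w ++ u` of the form `w.drop (n - j) ++ u` are nested, increasing in `j`. -/
lemma drop_append_suffix_tail {α : Type*} {w u : List α} {n i j : ℕ} (hw : w.length = n) (hij : i < j)
    (hj : j ≤ n) : w.drop (n - i) ++ u <:+ (w.drop (n - j) ++ u).tail := by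
  have hne : w.drop (n - j) ≠ [] := by
    intro h
    have := congrArg List.length h
    simp at this
    omega
  rw [List.tail_append_of_ne_nil hne, List.tail_drop]
  refine ⟨(w.drop (n - j + 1)).take (j - i - 1), ?_⟩
  rw [← List.append_assoc]
  congr 1
  have h : w.drop (n - i) = (w.drop (n - j + 1)).drop (j - i - 1) := by
    rw [List.drop_drop]
    congr 1
    omega
  rw [h, List.take_append_drop]

/-- For `u` avoiding `w`, exactly one suffix `w.drop (n - j) ++ u` of `w ++ u` is a shortest
suffix containing `w`. -/
lemma card_extension_eq_one {w u : List α} {n m : ℕ} (hw : w.length = n)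
    (hu : u ∈ avoidWords w m) :
    ((Finset.Icc 1 n).filter (fun j => w.drop (n - j) ++ u ∈ freshWords w (m + j))).card = 1 := by
  obtain ⟨hlen, hav⟩ := mem_avoidWords.1 hu
  have hex : ∃ j, w <:+: w.drop (n - j) ++ u :=
    ⟨n, by simpa using (List.prefix_append w u).isInfix⟩
  classical
  set j := Nat.find hex with hjdef
  have hj : w <:+: w.drop (n - j) ++ u := Nat.find_spec hex
  have hjn : j ≤ n := Nat.find_min' hex (by simpa using (List.prefix_append w u).isInfix)
  have hj0 : j ≠ 0 := by
    intro h0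
    rw [h0, ← hw] at hj
    simp at hj
    exact hav hj
  have hmin : ¬ w <:+: w.drop (n - (j - 1)) ++ u := Nat.find_min hex (by omega)
  rw [Finset.card_eq_one]
  refine ⟨j, ?_⟩
  ext i
  simp only [Finset.mem_filter, Finset.mem_Icc, Finset.mem_singleton, mem_freshWords]
  constructor
  · rintro ⟨⟨hi1, hi2⟩, -, hpre, htail⟩
    have hle : j ≤ i := Nat.find_min' hex hpre.isInfix
    rcases hle.lt_or_eq with hlt | heq
    · exact absurd (hj.trans (drop_append_suffix_tail hw hlt hi2).isInfix) htail
    · exact heq.symm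
  · rintro rfl
    have hcons : w.drop (n - j) ++ u
        = w[n - j]'(by omega) :: (w.drop (n - (j - 1)) ++ u) := by
      rw [List.drop_eq_getElem_cons (by omega : n - j < w.length), List.cons_append]
      congr 3
      omega
    refine ⟨⟨by omega, hjn⟩, ?_, ?_, ?_⟩
    · simp; omega
    · rw [hcons, List.infix_cons_iff] at hj
      rw [hcons]
      exact hj.resolve_right hmin
    · rw [hcons]
      exact hmin

/-- Removing the first `j` letters identifies the words counted by `F (m+j)` with the avoiding
words `u` for which `w.drop (n - j) ++ u` is fresh, provided `j` is a bifix length; otherwise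
there are no such `u`. -/
lemma card_extension_fiber {w : List α} {n m j : ℕ} (hw : w.length = n) (h1 : 1 ≤ j)
    (hjn : j ≤ n) :
    ((avoidWords w m).filter (fun u => w.drop (n - j) ++ u ∈ freshWords w (m + j))).card
      = if w.take j = w.drop (n - j) then (freshWords w (m + j)).card else 0 := by
  split_ifs with hb
  · refine Finset.card_bij (fun u _ => w.drop (n - j) ++ u) ?_ ?_ ?_
    · intro u hu
      exact (Finset.mem_filter.1 hu).2
    · intro u _ v _ h
      exact List.append_cancel_left h
    · intro f hf
      obtain ⟨hlen, ⟨t, rfl⟩, htail⟩ := mem_freshWords.1 hf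
      -- the first `j` letters of `f = w ++ t` are `w.take j`, the suffix of `w` of length `j`
      have heq : w.drop (n - j) ++ (w.drop j ++ t) = w ++ t := by
        rw [← hb, ← List.append_assoc, List.take_append_drop]
      refine ⟨w.drop j ++ t, ?_, heq⟩
      rw [Finset.mem_filter, heq]
      refine ⟨mem_avoidWords.2 ⟨?_, fun hin => htail ?_⟩, hf⟩
      · simp at hlen ⊢
        omega
      · have hs := drop_append_suffix_tail (u := w.drop j ++ t) hw (by omega : 0 < j) hjn
        rw [heq] at hs
        refine hin.trans (List.IsSuffix.isInfix ?_)
        simpa [← hw] using hs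
  · rw [Finset.card_eq_zero, Finset.filter_eq_empty_iff]
    intro u _ hu
    obtain ⟨-, hpre, -⟩ := mem_freshWords.1 hu
    apply hb
    have hl : (w.drop (n - j)).length = j := by simp; omega
    have := List.prefix_of_prefix_length_le ((List.take_prefix j w).trans hpre)
      (List.prefix_append _ u) (by rw [hl]; simp)
    exact this.eq_of_length (by simp; omega)

lemma card_avoid_eq_sum {w : List α} {n : ℕ} (hw : w.length = n) (m : ℕ) :
    (avoidWords w m).card = ∑ j ∈ Finset.Icc 1 n,
      if w.take j = w.drop (n - j) then (freshWords w (m + j)).card else 0 := by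
  -- double counting of the pairs `(u, j)` with `w.drop (n - j) ++ u` fresh
  have key := Finset.sum_card_bipartiteAbove_eq_sum_card_bipartiteBelow
    (s := avoidWords w m) (t := Finset.Icc 1 n)
    (fun u j => w.drop (n - j) ++ u ∈ freshWords w (m + j))
  rw [Finset.card_eq_sum_ones,
    Finset.sum_congr rfl (fun u hu => (card_extension_eq_one hw hu).symm)]
  refine key.trans ?_
  refine Finset.sum_congr rfl fun j hj => ?_
  rw [Finset.mem_Icc] at hj
  exact card_extension_fiber hw hj.1 hj.2

lemma card_fresh_of_lt {w : List α} {m : ℕ} (h : m < w.length) :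
    (freshWords w m).card = 0 := by
  rw [Finset.card_eq_zero, Finset.eq_empty_iff_forall_notMem]
  intro l hl
  obtain ⟨hlen, hpre, -⟩ := mem_freshWords.1 hl
  have := hpre.length_le
  omega

lemma card_avoid_zero {w : List α} (h : w ≠ []) : (avoidWords w 0).card = 1 := by
  rw [Finset.card_eq_one]
  refine ⟨[], ?_⟩
  ext l
  simp only [mem_avoidWords, List.length_eq_zero_iff, Finset.mem_singleton]
  constructor
  · exact fun h => h.1
  · rintro rfl
    simpa using h

/-- The number of words of length `k` avoiding `w`, and the number of fresh ones, depend only on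
the set of bifix lengths of `w`. -/
lemma card_eq_of_bifix {w w' : List α} {n : ℕ} (hn : 1 ≤ n) (hw : w.length = n)
    (hw' : w'.length = n)
    (hb : ∀ j, 1 ≤ j → j ≤ n - 1 → (w.take j = w.drop (n - j) ↔ w'.take j = w'.drop (n - j)))
    (k : ℕ) : (avoidWords w k).card = (avoidWords w' k).card ∧
      (freshWords w k).card = (freshWords w' k).card := by
  induction k using Nat.strong_induction_on with
  | _ k ih =>
  have hF : (freshWords w k).card = (freshWords w' k).card := by
    rcases lt_or_ge k n with hk | hk
    · rw [card_fresh_of_lt (hw ▸ hk), card_fresh_of_lt (hw' ▸ hk)]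
    · obtain ⟨m, rfl⟩ := Nat.exists_eq_add_of_le' hk
      obtain ⟨p, rfl⟩ : ∃ p, n = p + 1 := ⟨n - 1, by omega⟩
      have e := card_avoid_eq_sum hw m
      have e' := card_avoid_eq_sum hw' m
      rw [Finset.sum_Icc_succ_top (by omega)] at e e'
      have hs : (∑ j ∈ Finset.Icc 1 p,
          if w.take j = w.drop (p + 1 - j) then (freshWords w (m + j)).card else 0)
          = ∑ j ∈ Finset.Icc 1 p,
          if w'.take j = w'.drop (p + 1 - j) then (freshWords w' (m + j)).card else 0 := by
        refine Finset.sum_congr rfl fun j hj => ?_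
        rw [Finset.mem_Icc] at hj
        rw [(ih (m + j) (by omega)).2]
        simp only [hb j hj.1 (by omega)]
      rw [if_pos (by simp [← hw])] at e
      rw [if_pos (by simp [← hw'])] at e'
      have := (ih m (by omega)).1
      omega
  refine ⟨?_, hF⟩
  cases k with
  | zero =>
    rw [card_avoid_zero (by rintro rfl; simp at hw; omega),
      card_avoid_zero (by rintro rfl; simp at hw'; omega)]
  | succ m =>
    have e := card_avoid_add_card_fresh w m
    have e' := card_avoid_add_card_fresh w' m
    rw [(ih m (by omega)).1] at e
    omega

lemma card_filter_ofFn_add_card_avoid (w : List α) (k : ℕ) :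
    (Finset.univ.filter (fun d : Fin k → α => w <:+: List.ofFn d)).card + (avoidWords w k).card
      = Fintype.card (Fin k → α) := by
  have h : (avoidWords w k).card
      = (Finset.univ.filter (fun d : Fin k → α => ¬ w <:+: List.ofFn d)).card := by
    symm
    refine Finset.card_bij (fun d _ => List.ofFn d) ?_ ?_ ?_
    · intro d hd
      exact mem_avoidWords.2 ⟨by simp, (Finset.mem_filter.1 hd).2⟩
    · intro d _ d' _ h
      exact List.ofFn_injective h
    · intro l hl
      obtain ⟨rfl, hav⟩ := mem_avoidWords.1 hl
      exact ⟨l.get, by simpa using hav, by simp⟩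
  rw [h, Finset.card_filter_add_card_filter_not, Finset.card_univ]

end Words

/-- If two words `b, b'` of length `n ≥ 2` over an alphabet with `L ≥ 2` letters have the
same bifix indicator, then for every `k` the probability that `b` occurs as a contiguous
substring of a uniformly random word of length `k` equals the corresponding probability
for `b'`. -/
theorem stmt0 (L n : ℕ) (hL : 2 ≤ L) (hn : 2 ≤ n) (b b' : Fin n → Fin L)
    (hbif : ∀ i, 1 ≤ i → i ≤ n - 1 → bifixInd L n b i = bifixInd L n b' i) :
    ∀ k, occProb L n k b = occProb L n k b' := by
  intro k
  have hA := (card_eq_of_bifix (w := List.ofFn b) (w' := List.ofFn b') (n := n) (by omega)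
    (by simp) (by simp) (by
      intro j h1 h2
      have := hbif j h1 h2
      unfold bifixInd at this
      split_ifs at this <;> simp_all) k).1
  have e := card_filter_ofFn_add_card_avoid (List.ofFn b) k
  have e' := card_filter_ofFn_add_card_avoid (List.ofFn b') k
  have hc : (Finset.univ.filter
      (fun d : Fin k → Fin L => List.ofFn b <:+: List.ofFn d)).card
      = (Finset.univ.filter (fun d : Fin k → Fin L => List.ofFn b' <:+: List.ofFn d)).card := by
    omega
  unfold occProb
  rw [← Nat.cast_inj (R := ℝ)] at hc
  congr 1
end

section
/- Over the binary alphabet (L = 2), consider the four words b¹ = (1,0,0,0,0), b² = (1,0,0,0,1), b³ = (1,0,0,1,0), b⁴ = (1,1,0,1,1) of length 5, with bifix indicators h¹ = (0,0,0,0), h² = (1,0,0,0), h³ = (0,1,0,0), h⁴ = (1,1,0,0). Although h¹ + h⁴ = h² + h³ componentwise, the probabilities of occurrence in a uniformly random binary word of length 12 satisfy P¹_{12} + P⁴_{12} ≠ P²_{12} + P³_{12}; hence P_k does not depend affinely on the bifix indicator. -/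
/-- For `l` without an occurrence of `w` in its tail, the number of ways to prepend `k` letters to
`l` so that the result contains `w`. -/
def countExt (w : List (Fin 2)) : ℕ → List (Fin 2) → ℕ
  | 0, l => bif w.isPrefixOf l then 1 else 0
  | k + 1, l => bif w.isPrefixOf l then 2 ^ (k + 1)
      else countExt w k (0 :: l) + countExt w k (1 :: l)

theorem card_append_infix (w : List (Fin 2)) (k : ℕ) (l : List (Fin 2))
    (hl : ¬ w <:+: l.tail) :
    (Finset.univ.filter fun d : Fin k → Fin 2 => w <:+: List.ofFn d ++ l).card
      = countExt w k l := by
  have infix_iff : w <:+: l ↔ w <+: l := by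
    cases l with
    | nil => simp
    | cons a t =>
      rw [List.tail_cons] at hl
      simp [List.infix_cons_iff, hl]
  induction k generalizing l with
  | zero =>
    rw [countExt, Bool.cond_eq_ite, Finset.card_filter]
    simp [infix_iff]
  | succ k ih =>
    rw [countExt, Bool.cond_eq_ite]
    by_cases hp : w <+: l
    · have h_all (d : Fin (k + 1) → Fin 2) : w <:+: List.ofFn d ++ l :=
        hp.isInfix.trans (List.suffix_append _ _).isInfix
      simp only [h_all, List.isPrefixOf_iff_prefix, hp, Finset.filter_true, if_true]
      simp
    · have hn : ¬ w <:+: l := by rwa [infix_iff]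
      have iff_cons (a : Fin 2) : w <:+: a :: l ↔ w <+: a :: l := by
        simp [List.infix_cons_iff, hn]
      rw [if_neg (by simpa using hp), ← ih (0 :: l) (by simpa using hn) (iff_cons 0),
        ← ih (1 :: l) (by simpa using hn) (iff_cons 1)]
      simp only [Finset.card_filter]
      -- Split off the last letter of the prepended word, the one adjacent to `l`.
      rw [← (Fin.snocEquiv fun _ : Fin (k + 1) => Fin 2).sum_comp, Fintype.sum_prod_type,
        Fin.sum_univ_two]
      simp only [Fin.snocEquiv_apply, List.ofFn_succ', Fin.snoc_castSucc, Fin.snoc_last,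
        List.concat_eq_append, List.append_assoc, List.singleton_append]

theorem card_infix {k : ℕ} (b : Fin 5 → Fin 2) (w : List (Fin 2)) (hb : List.ofFn b = w) :
    (Finset.univ.filter fun d : Fin k → Fin 2 => List.ofFn b <:+: List.ofFn d).card
      = countExt w k [] := by
  have hw : w ≠ [] := by
    rintro rfl
    simp at hb
  rw [← card_append_infix w k [] (by simpa using hw)]
  simp only [hb, List.append_nil]

/-- For `L = 2` and the words `b¹ = (1,0,0,0,0)`, `b² = (1,0,0,0,1)`, `b³ = (1,0,0,1,0)`,
`b⁴ = (1,1,0,1,1)`, the bifix indicators satisfy `h¹ + h⁴ = h² + h³` componentwise, but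
`P¹_{12} + P⁴_{12} ≠ P²_{12} + P³_{12}`: the probability `P_k` does not depend affinely on
the bifix indicator. -/
theorem stmt8 :
    (∀ i, 1 ≤ i → i ≤ 4 →
      bifixInd 2 5 ![1,0,0,0,0] i + bifixInd 2 5 ![1,1,0,1,1] i =
        bifixInd 2 5 ![1,0,0,0,1] i + bifixInd 2 5 ![1,0,0,1,0] i) ∧
    occProb 2 5 12 ![1,0,0,0,0] + occProb 2 5 12 ![1,1,0,1,1] ≠
      occProb 2 5 12 ![1,0,0,0,1] + occProb 2 5 12 ![1,0,0,1,0] := by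
  constructor
  · intro i h1 h4
    interval_cases i <;> decide
  · unfold occProb
    rw [card_infix ![1,0,0,0,0] [1,0,0,0,0] rfl, card_infix ![1,1,0,1,1] [1,1,0,1,1] rfl,
      card_infix ![1,0,0,0,1] [1,0,0,0,1] rfl, card_infix ![1,0,0,1,0] [1,0,0,1,0] rfl,
      ← add_div, ← add_div]
    intro h
    have h_real := (div_left_inj' (by positivity)).1 h
    have h_nat : countExt [1,0,0,0,0] 12 [] + countExt [1,1,0,1,1] 12 [] =
        countExt [1,0,0,0,1] 12 [] + countExt [1,0,0,1,0] 12 [] := by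
      exact_mod_cast h_real
    revert h_nat
    decide +kernel
end

section
/- Let L ≥ 2, n ≥ 2, and let s = (s_0,…,s_{n−1}) satisfy 0 ≤ s_i ≤ i. For the Markov chain X(s), one has P_k(i) > 0 if and only if k + i ≥ n, for all k ≥ 0 and 0 ≤ i ≤ n. -/
lemma transMat_nonneg {L n : ℕ} (hL : 2 ≤ L) (s : ℕ → ℕ) (i j : Fin (n + 1)) :
    0 ≤ transMat L n s i j := by
  have hL' : (2 : ℝ) ≤ L := by exact_mod_cast hL
  have h1 : (0 : ℝ) ≤ 1 / L := by positivity
  have h2 : (0 : ℝ) ≤ ((L : ℝ) - 2) / L := div_nonneg (by linarith) (by linarith)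
  have h3 : (0 : ℝ) ≤ ((L : ℝ) - 1) / L := div_nonneg (by linarith) (by linarith)
  unfold transMat
  split_ifs <;> linarith

/-- A step with positive probability raises the state by at most one. -/
lemma le_succ_of_transMat_pos {L n : ℕ} {s : ℕ → ℕ} (hs : ∀ i < n, s i ≤ i)
    {i j : Fin (n + 1)} (h : 0 < transMat L n s i j) : (j : ℕ) ≤ i + 1 := by
  by_contra hij
  have hi : (i : ℕ) < n := by omega
  have hsi := hs i hi
  have h1 : ¬ (i : ℕ) = n := by omega
  have h2 : ¬ (j : ℕ) = (i : ℕ) + 1 := by omega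
  have h3 : ¬ ((j : ℕ) = s i ∧ 0 < s i) := by omega
  have h4 : ¬ (j : ℕ) = 0 := by omega
  simp only [transMat, if_neg h1, if_neg h2, if_neg h3, if_neg h4] at h
  linarith

/-- From every state there is a step of positive probability that climbs by one, or stays at the
absorbing state `n`. -/
lemma exists_transMat_pos {L n : ℕ} (hL : 2 ≤ L) (s : ℕ → ℕ) (i : Fin (n + 1)) :
    ∃ j : Fin (n + 1), 0 < transMat L n s i j ∧ min n ((i : ℕ) + 1) ≤ j := by
  have hL' : (2 : ℝ) ≤ L := by exact_mod_cast hL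
  by_cases hi : (i : ℕ) = n
  · exact ⟨i, by simp [transMat, hi], by omega⟩
  · refine ⟨⟨i + 1, by omega⟩, ?_, by simp⟩
    have h1 : (0 : ℝ) < 1 / L := by positivity
    simp only [transMat, if_neg hi, if_true, Nat.succ_ne_zero, if_false]
    split_ifs <;> linarith

lemma hitProb_succ (L n : ℕ) (s : ℕ → ℕ) (k : ℕ) (i : Fin (n + 1)) :
    hitProb L n s (k + 1) i = ∑ j, transMat L n s i j * hitProb L n s k j := by
  simp only [hitProb, pow_succ', Matrix.mul_apply]

lemma hitProb_nonneg {L n : ℕ} (hL : 2 ≤ L) (s : ℕ → ℕ) (k : ℕ) (i : Fin (n + 1)) :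
    0 ≤ hitProb L n s k i := by
  induction k generalizing i with
  | zero =>
    simp only [hitProb, pow_zero, Matrix.one_apply]
    split_ifs <;> norm_num
  | succ k ih =>
    rw [hitProb_succ]
    exact Finset.sum_nonneg fun j _ => mul_nonneg (transMat_nonneg hL s i j) (ih j)

/-- `P_{k+1}(i) > 0` exactly when some step of positive probability leads to a state `j` with
`P_k(j) > 0`; nonnegativity rules out cancellation. -/
lemma hitProb_succ_pos_iff {L n : ℕ} (hL : 2 ≤ L) (s : ℕ → ℕ) (k : ℕ) (i : Fin (n + 1)) :
    0 < hitProb L n s (k + 1) i ↔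
      ∃ j, 0 < transMat L n s i j ∧ 0 < hitProb L n s k j := by
  have hT := transMat_nonneg hL s i
  have hP := hitProb_nonneg (n := n) hL s k
  rw [hitProb_succ, Finset.sum_pos_iff_of_nonneg fun j _ => mul_nonneg (hT j) (hP j)]
  refine exists_congr fun j => ⟨fun ⟨_, h⟩ => ?_, fun ⟨h1, h2⟩ => ⟨Finset.mem_univ j, mul_pos h1 h2⟩⟩
  exact ⟨pos_of_mul_pos_left h (hP j), pos_of_mul_pos_right h (hT j)⟩

/-- For the Markov chain `X(s)`, one has `P_k(i) > 0` if and only if `k + i ≥ n`. -/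
theorem stmt11 (L n : ℕ) (hL : 2 ≤ L) (hn : 2 ≤ n) (s : ℕ → ℕ) (hs : ∀ i < n, s i ≤ i) :
    ∀ (k : ℕ) (i : Fin (n + 1)), 0 < hitProb L n s k i ↔ n ≤ k + (i : ℕ) := by
  intro k
  induction k with
  | zero =>
    intro i
    simp only [hitProb, pow_zero, Matrix.one_apply, Fin.ext_iff, Fin.val_last]
    split_ifs with h
    · simp [h]
    · simp only [lt_irrefl, false_iff]
      omega
  | succ k ih =>
    intro i
    rw [hitProb_succ_pos_iff hL]
    constructor
    · rintro ⟨j, hj, hP⟩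
      have h1 := le_succ_of_transMat_pos hs hj
      have h2 := (ih j).1 hP
      omega
    · intro h
      obtain ⟨j, hj, hij⟩ := exists_transMat_pos hL s i
      exact ⟨j, hj, (ih j).2 (by omega)⟩
end

section
/- Let L ≥ 2, n ≥ 2, and let s = (s_0,…,s_{n−1}) satisfy 0 ≤ s_i ≤ i. For the Markov chain X(s), if k + i ≥ n then P_k(i) ≥ 1/L^{n−i}. -/
/-- The first-step decomposition, restricted to a single first step. -/
lemma mul_hitProb_le {L n : ℕ} (hL : 2 ≤ L) (s : ℕ → ℕ) (k : ℕ) (i j : Fin (n + 1)) :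
    transMat L n s i j * hitProb L n s k j ≤ hitProb L n s (k + 1) i := by
  rw [hitProb_succ]
  exact Finset.single_le_sum
    (f := fun j => transMat L n s i j * hitProb L n s k j)
    (fun j _ => mul_nonneg (transMat_nonneg hL s i j) (hitProb_nonneg hL s k j))
    (Finset.mem_univ j)

lemma le_transMat_succ {L n : ℕ} (s : ℕ → ℕ) (i j : Fin (n + 1))
    (hi : (i : ℕ) < n) (hj : (j : ℕ) = i + 1) : 1 / (L : ℝ) ≤ transMat L n s i j := by
  have h0 : (0 : ℝ) ≤ 1 / L := by positivity
  have hj0 : (j : ℕ) ≠ 0 := by omega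
  unfold transMat
  rw [if_neg hi.ne, if_pos hj, if_neg hj0]
  split_ifs <;> linarith

/-- For the Markov chain `X(s)`, if `k + i ≥ n` then `P_k(i) ≥ 1/L^{n−i}`. -/
theorem stmt12 (L n : ℕ) (hL : 2 ≤ L) (hn : 2 ≤ n) (s : ℕ → ℕ) (hs : ∀ i < n, s i ≤ i) :
    ∀ (k : ℕ) (i : Fin (n + 1)), n ≤ k + (i : ℕ) →
      1 / (L : ℝ) ^ (n - (i : ℕ)) ≤ hitProb L n s k i := by
  intro k
  induction k with
  | zero =>
    intro i hi
    have hin : i = Fin.last n := Fin.ext (by have := i.isLt; simp; omega)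
    subst hin
    simp [hitProb]
  | succ k ih =>
    intro i hi
    by_cases hin : (i : ℕ) = n
    · have h := mul_hitProb_le hL s k i i
      have h1 : transMat L n s i i = 1 := by simp [transMat, hin]
      rw [h1, one_mul] at h
      exact (ih i (by omega)).trans h
    · have hlt : (i : ℕ) < n := by have := i.isLt; omega
      let j : Fin (n + 1) := ⟨i + 1, by omega⟩
      have hexp : n - (i : ℕ) = (n - (j : ℕ)) + 1 := by simp only [j]; omega
      calc 1 / (L : ℝ) ^ (n - (i : ℕ)) = 1 / L * (1 / (L : ℝ) ^ (n - (j : ℕ))) := by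
            rw [hexp, pow_succ', one_div_mul_one_div]
        _ ≤ transMat L n s i j * hitProb L n s k j :=
            mul_le_mul (le_transMat_succ s i j hlt rfl)
              (ih j (by simp only [j]; omega)) (by positivity) (transMat_nonneg hL s i j)
        _ ≤ _ := mul_hitProb_le hL s k i j
end

section
/- Let L ≥ 2, n ≥ 2, and let s = (s_0,…,s_{n−1}) satisfy 0 ≤ s_i ≤ i. For the Markov chain X(s), the hitting probabilities are monotone in the starting state: P_k(i+1) ≥ P_k(i) for all k ≥ 0 and 0 ≤ i ≤ n−1. Moreover, if k + i + 1 ≥ n then this inequality is strict, and otherwise both sides equal 0. -/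
/-- The family `g k i` satisfies the first-step equations of the probabilities `P_k(i)` on the
states `i ≤ n`; values at `i > n` are unconstrained. Only these equations enter the argument. -/
structure FirstStep (L n : ℕ) (s : ℕ → ℕ) (g : ℕ → ℕ → ℝ) : Prop where
  two_le : 2 ≤ L
  le_self : ∀ i < n, s i ≤ i
  absorbed : ∀ k, g k n = 1
  start : ∀ i < n, g 0 i = 0
  step : ∀ k, ∀ i < n, (L : ℝ) * g (k + 1) i = g k (i + 1) + g k (s i) + ((L : ℝ) - 2) * g k 0

namespace FirstStep

variable {L n : ℕ} {s : ℕ → ℕ} {g : ℕ → ℕ → ℝ}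

lemma two_le_cast (h : FirstStep L n s g) : (2 : ℝ) ≤ L := by exact_mod_cast h.two_le

lemma nonneg (h : FirstStep L n s g) (k : ℕ) : ∀ i ≤ n, 0 ≤ g k i := by
  have hL := h.two_le_cast
  induction k with
  | zero =>
    intro i hi
    rcases hi.eq_or_lt with rfl | hi
    · simp [h.absorbed]
    · simp [h.start i hi]
  | succ k ih =>
    intro i hi
    rcases hi.eq_or_lt with rfl | hi
    · simp [h.absorbed]
    · have h1 := ih (i + 1) hi
      have h2 := ih (s i) ((h.le_self i hi).trans hi.le)
      have h3 := mul_nonneg (sub_nonneg.2 hL) (ih 0 (Nat.zero_le _))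
      have h4 := h.step k i hi
      exact nonneg_of_mul_nonneg_right (by linarith : 0 ≤ (L : ℝ) * g (k + 1) i) (by linarith)

/-- The state `n` is absorbing, so the hitting probabilities do not decrease with time. -/
lemma time_mono (h : FirstStep L n s g) (k : ℕ) : ∀ i ≤ n, g k i ≤ g (k + 1) i := by
  have hL := h.two_le_cast
  induction k with
  | zero =>
    intro i hi
    rcases hi.eq_or_lt with rfl | hi
    · simp [h.absorbed]
    · rw [h.start i hi]
      exact h.nonneg _ i hi.le
  | succ k ih =>
    intro i hi
    rcases hi.eq_or_lt with rfl | hi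
    · simp [h.absorbed]
    · have h1 := ih (i + 1) hi
      have h2 := ih (s i) ((h.le_self i hi).trans hi.le)
      have h3 := mul_le_mul_of_nonneg_left (ih 0 (Nat.zero_le _)) (sub_nonneg.2 hL)
      have h4 := h.step k i hi
      have h5 := h.step (k + 1) i hi
      exact le_of_mul_le_mul_left (by linarith : (L : ℝ) * g (k + 1) i ≤ L * g (k + 1 + 1) i)
        (by linarith)

lemma le_of_succ_le {k : ℕ} (hk : ∀ i < n, g k i ≤ g k (i + 1)) {i j : ℕ} (hij : i ≤ j)
    (hj : j ≤ n) : g k i ≤ g k j := by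
  induction j, hij using Nat.le_induction with
  | base => exact le_rfl
  | succ j _ ih => exact (ih (by omega)).trans (hk j (by omega))

lemma mono_succ (h : FirstStep L n s g) (k : ℕ) : ∀ i < n, g k i ≤ g k (i + 1) := by
  have hL := h.two_le_cast
  induction k with
  | zero =>
    intro i hi
    rw [h.start i hi]
    exact h.nonneg _ _ hi
  | succ k ih =>
    intro i hi
    have hsi := h.le_self i hi
    have h1 : g k (s i) ≤ g k (i + 1) := le_of_succ_le ih (by omega) hi
    have h2 : g k 0 ≤ g k (i + 1) := le_of_succ_le ih (by omega) hi
    have h3 := mul_le_mul_of_nonneg_left h2 (sub_nonneg.2 hL)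
    have h4 := h.step k i hi
    have h5 : g (k + 1) i ≤ g k (i + 1) :=
      le_of_mul_le_mul_left (by linarith : (L : ℝ) * g (k + 1) i ≤ L * g k (i + 1)) (by linarith)
    exact h5.trans (h.time_mono k _ hi)

/-- The chain climbs at most one state per step. -/
lemma eq_zero (h : FirstStep L n s g) (k : ℕ) : ∀ i, k + i < n → g k i = 0 := by
  have hL := h.two_le_cast
  induction k with
  | zero => exact fun i hi => h.start i (by omega)
  | succ k ih =>
    intro i hi
    have hsi := h.le_self i (by omega)
    have h4 := h.step k i (by omega)
    rw [ih (i + 1) (by omega), ih (s i) (by omega), ih 0 (by omega)] at h4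
    have h5 : (L : ℝ) * g (k + 1) i = 0 := by linarith
    exact (mul_eq_zero.1 h5).resolve_left (by linarith)

/-- Climbing straight up from `i` to `n` has positive probability. -/
lemma pos (h : FirstStep L n s g) (k : ℕ) : ∀ i ≤ n, n ≤ k + i → 0 < g k i := by
  have hL := h.two_le_cast
  induction k with
  | zero =>
    intro i hi hk
    obtain rfl : i = n := by omega
    simp [h.absorbed]
  | succ k ih =>
    intro i hi hk
    rcases hi.eq_or_lt with rfl | hi
    · simp [h.absorbed]
    · have h1 := ih (i + 1) hi (by omega)
      have h2 := h.nonneg k (s i) ((h.le_self i hi).trans hi.le)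
      have h3 := mul_nonneg (sub_nonneg.2 hL) (h.nonneg k 0 (Nat.zero_le _))
      have h4 := h.step k i hi
      exact pos_of_mul_pos_right (by linarith : 0 < (L : ℝ) * g (k + 1) i) (by linarith)

lemma strict (h : FirstStep L n s g) (k : ℕ) : ∀ i < n, n ≤ k + i + 1 → g k i < g k (i + 1) := by
  have hL := h.two_le_cast
  induction k with
  | zero =>
    intro i hi hk
    rw [h.start i hi]
    exact h.pos _ _ hi (by omega)
  | succ k ih =>
    intro i hi hk
    by_cases hk' : k + 1 + i < n
    · rw [h.eq_zero _ _ hk']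
      exact h.pos _ _ hi (by omega)
    · have hsi := h.le_self i hi
      have h1 : g k (s i) < g k (i + 1) :=
        (le_of_succ_le (h.mono_succ k) hsi hi.le).trans_lt (ih i hi (by omega))
      have h2 : g k 0 ≤ g k (i + 1) := le_of_succ_le (h.mono_succ k) (by omega) hi
      have h3 := mul_le_mul_of_nonneg_left h2 (sub_nonneg.2 hL)
      have h4 := h.step k i hi
      have h5 : g (k + 1) i < g k (i + 1) :=
        lt_of_mul_lt_mul_left (by linarith : (L : ℝ) * g (k + 1) i < L * g k (i + 1))
          (by linarith)
      exact h5.trans_le (h.time_mono k _ hi)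

end FirstStep

lemma hitProb_last (L n : ℕ) (s : ℕ → ℕ) (k : ℕ) : hitProb L n s k (Fin.last n) = 1 := by
  induction k with
  | zero => simp [hitProb]
  | succ k ih =>
    rw [hitProb_succ, Finset.sum_eq_single (Fin.last n)]
    · simp [transMat, ih]
    · intro j _ hj
      have : (j : ℕ) ≠ n := fun h => hj (Fin.ext h)
      simp [transMat, this]
    · simp

/-- The first-step equation. The cases `s_i > 0` and `s_i = 0` of the transition matrix merge:
for `s_i = 0` the mass `(L-1)/L` at `0` is `1/L` at `s_i` plus `(L-2)/L` at `0`. -/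
lemma hitProb_step (L n : ℕ) (hL : 2 ≤ L) (s : ℕ → ℕ) (k i : ℕ) (hi : i < n) (hs : s i ≤ i) :
    (L : ℝ) * hitProb L n s (k + 1) ⟨i, by omega⟩ = hitProb L n s k ⟨i + 1, by omega⟩ +
      hitProb L n s k ⟨s i, by omega⟩ + ((L : ℝ) - 2) * hitProb L n s k ⟨0, by omega⟩ := by
  have hL0 : (L : ℝ) ≠ 0 := by
    have : L ≠ 0 := by omega
    exact_mod_cast this
  have key : ∀ j : Fin (n + 1), transMat L n s ⟨i, by omega⟩ j =
      (if j = ⟨i + 1, by omega⟩ then 1 / (L : ℝ) else 0) +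
      (if j = ⟨s i, by omega⟩ then 1 / (L : ℝ) else 0) +
      (if j = ⟨0, by omega⟩ then ((L : ℝ) - 2) / L else 0) := by
    intro j
    simp only [transMat, Fin.ext_iff, hi.ne, if_false]
    rcases Nat.eq_zero_or_pos (s i) with h0 | h0
    · simp only [h0, lt_irrefl, and_false, if_false, add_zero]
      split_ifs <;> ring
    · simp only [h0, and_true, if_true]
  rw [hitProb_succ]
  simp only [key, add_mul, ite_mul, zero_mul, Finset.sum_add_distrib, Finset.sum_ite_eq',
    Finset.mem_univ, if_true]
  field_simp

lemma firstStep_hitProb (L n : ℕ) (hL : 2 ≤ L) (s : ℕ → ℕ) (hs : ∀ i < n, s i ≤ i) :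
    FirstStep L n s (fun k i => if h : i < n + 1 then hitProb L n s k ⟨i, h⟩ else 0) where
  two_le := hL
  le_self := hs
  absorbed k := by
    simp only [Nat.lt_succ_self, dif_pos]
    exact hitProb_last L n s k
  start i hi := by
    have hne : (⟨i, by omega⟩ : Fin (n + 1)) ≠ Fin.last n := fun h => hi.ne (Fin.ext_iff.1 h)
    simp only [show i < n + 1 by omega, dif_pos, hitProb, pow_zero, Matrix.one_apply_ne hne]
  step k i hi := by
    have hsi := hs i hi
    simp only [show i < n + 1 by omega, show i + 1 < n + 1 by omega, show s i < n + 1 by omega,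
      show 0 < n + 1 by omega, dif_pos]
    exact hitProb_step L n hL s k i hi hsi

/-- The hitting probabilities `P_k(i)` of the Markov chain `X(s)` are monotone in the
starting state: `P_k(i+1) ≥ P_k(i)` for `0 ≤ i ≤ n−1`; the inequality is strict whenever
`k + i + 1 ≥ n`, and otherwise both sides vanish. -/
theorem stmt13 (L n : ℕ) (hL : 2 ≤ L) (hn : 2 ≤ n) (s : ℕ → ℕ) (hs : ∀ i < n, s i ≤ i) :
    ∀ (k i : ℕ) (hi : i ≤ n - 1),
      hitProb L n s k ⟨i, by omega⟩ ≤ hitProb L n s k ⟨i + 1, by omega⟩ ∧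
      (n ≤ k + i + 1 → hitProb L n s k ⟨i, by omega⟩ < hitProb L n s k ⟨i + 1, by omega⟩) ∧
      (k + i + 1 < n →
        hitProb L n s k ⟨i, by omega⟩ = 0 ∧ hitProb L n s k ⟨i + 1, by omega⟩ = 0) := by
  intro k i hi
  have h := firstStep_hitProb L n hL s hs
  have hin : i < n := by omega
  have h1 := h.mono_succ k i hin
  have h2 := h.strict k i hin
  have h3 := h.eq_zero k i
  have h4 := h.eq_zero k (i + 1)
  simp only [show i < n + 1 by omega, show i + 1 < n + 1 by omega, dif_pos] at h1 h2 h3 h4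
  exact ⟨h1, h2, fun hk => ⟨h3 (by omega), h4 (by omega)⟩⟩
end

section
/- Let L ≥ 2, n ≥ 2, and let s = (s_0,…,s_{n−1}) and s' = (s'_0,…,s'_{n−1}) both satisfy 0 ≤ s_i ≤ i and 0 ≤ s'_i ≤ i, with s > s' (componentwise s_i ≥ s'_i for all i, and s ≠ s'). Set k₀ := n + 1 + min{ i − s_i : 0 ≤ i ≤ n−1 with s_i > s'_i }. Then the hitting probabilities from state 0 of the associated Markov chains satisfy P_k(0) > P'_k(0) for all k ≥ k₀, and P_k(0) = P'_k(0) for all k < k₀. -/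
/-- The hitting probability `P_k(i)`, given by its first-step recursion. The state space is extended
to all of `ℕ` by making every state `i ≥ n` count as absorbed. -/
noncomputable def hitRec (L n : ℕ) (s : ℕ → ℕ) : ℕ → ℕ → ℝ
  | 0, i => if n ≤ i then 1 else 0
  | k + 1, i => if n ≤ i then 1 else
      (hitRec L n s k (i + 1) + hitRec L n s k (s i) + ((L : ℝ) - 2) * hitRec L n s k 0) / L

section

variable {L n : ℕ} {s s' : ℕ → ℕ}

theorem hitRec_of_le {i : ℕ} (k : ℕ) (h : n ≤ i) : hitRec L n s k i = 1 := by
  cases k <;> simp [hitRec, h]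

theorem hitRec_succ {i : ℕ} (k : ℕ) (h : i < n) : hitRec L n s (k + 1) i =
    (hitRec L n s k (i + 1) + hitRec L n s k (s i) + ((L : ℝ) - 2) * hitRec L n s k 0) / L := by
  rw [hitRec, if_neg (by omega)]

theorem hitProb_eq_hitRec (hL : 2 ≤ L) (hs : ∀ i < n, s i ≤ i) (k : ℕ) (i : Fin (n + 1)) :
    hitProb L n s k i = hitRec L n s k i := by
  have hL0 : (L : ℝ) ≠ 0 := by positivity
  induction k generalizing i with
  | zero =>
    have h1 : (i = Fin.last n) ↔ n ≤ (i : ℕ) := by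
      rw [Fin.ext_iff, Fin.val_last]; omega
    simp [hitProb, hitRec, Matrix.one_apply, h1]
  | succ k ih =>
    have hstep : hitProb L n s (k + 1) i = ∑ j, transMat L n s i j * hitRec L n s k j := by
      rw [hitProb, pow_succ', Matrix.mul_apply]
      exact Finset.sum_congr rfl fun j _ => by rw [← ih j]; rfl
    refine (hstep.trans (Fin.sum_univ_eq_sum_range (fun j =>
      (if (i : ℕ) = n then (if j = n then (1 : ℝ) else 0)
      else
      (if j = (i : ℕ) + 1 then 1 / (L : ℝ) else 0) +
      (if j = s i ∧ 0 < s i then 1 / (L : ℝ) else 0) +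
      (if j = 0 then (if 0 < s i then ((L : ℝ) - 2) / L else ((L : ℝ) - 1) / L) else 0))
        * hitRec L n s k j) (n + 1))).trans ?_
    rcases eq_or_lt_of_le (Nat.lt_succ_iff.mp i.2) with hi | hi
    · simp [hi, hitRec_of_le]
    · have hsi := hs i hi
      have hne : (i : ℕ) ≠ n := by omega
      rw [hitRec_succ k hi]
      simp only [hne, if_false, add_mul, Finset.sum_add_distrib, ite_mul, zero_mul]
      have hlt : s i < n + 1 := by omega
      by_cases h0 : 0 < s i
      · simp [h0, hi, hlt]
        field_simp
      · have h00 : s i = 0 := by omega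
        simp [h00, hi]
        field_simp
        ring

theorem hitRec_nonneg (hL : 2 ≤ L) (k i : ℕ) : 0 ≤ hitRec L n s k i := by
  have hL2 : (0 : ℝ) ≤ (L : ℝ) - 2 := by
    have : (2 : ℝ) ≤ L := by exact_mod_cast hL
    linarith
  induction k generalizing i with
  | zero => rw [hitRec]; split_ifs <;> norm_num
  | succ k ih =>
    rw [hitRec]
    split_ifs
    · norm_num
    · have := ih (i + 1)
      have := ih (s i)
      have := ih 0
      positivity

theorem hitRec_time_mono (hL : 2 ≤ L) (k i : ℕ) :
    hitRec L n s k i ≤ hitRec L n s (k + 1) i := by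
  have hL2 : (0 : ℝ) ≤ (L : ℝ) - 2 := by
    have : (2 : ℝ) ≤ L := by exact_mod_cast hL
    linarith
  rcases le_or_gt n i with hi | hi
  · simp [hitRec_of_le, hi]
  induction k generalizing i with
  | zero =>
    rw [hitRec, if_neg (by omega)]
    exact hitRec_nonneg hL _ _
  | succ k ih =>
    have ih' : ∀ j, hitRec L n s k j ≤ hitRec L n s (k + 1) j := fun j => by
      rcases le_or_gt n j with hj | hj
      · simp [hitRec_of_le, hj]
      · exact ih j hj
    rw [hitRec_succ k hi, hitRec_succ (k + 1) hi]
    have := ih' (i + 1)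
    have := ih' (s i)
    have := ih' 0
    gcongr

/-- One step of the chain reaches at most `i + 1`, the best of the states reachable from `i`. -/
theorem hitRec_succ_le_of_mono (hL : 2 ≤ L) (hs : ∀ i < n, s i ≤ i) {k : ℕ}
    (hm : Monotone (hitRec L n s k)) {i : ℕ} (hi : i < n) :
    hitRec L n s (k + 1) i ≤ hitRec L n s k (i + 1) := by
  have hL2 : (2 : ℝ) ≤ L := by exact_mod_cast hL
  rw [hitRec_succ k hi, div_le_iff₀ (by linarith)]
  have h1 : hitRec L n s k (s i) ≤ hitRec L n s k (i + 1) := hm (by have := hs i hi; omega)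
  have h2 : hitRec L n s k 0 ≤ hitRec L n s k (i + 1) := hm (by omega)
  nlinarith

theorem hitRec_mono (hL : 2 ≤ L) (hs : ∀ i < n, s i ≤ i) (k : ℕ) :
    Monotone (hitRec L n s k) := by
  induction k with
  | zero =>
    intro a b hab
    simp only [hitRec]
    split_ifs <;> first | omega | norm_num
  | succ k ih =>
    refine monotone_nat_of_le_succ fun i => ?_
    rcases le_or_gt n i with hi | hi
    · rw [hitRec_of_le _ hi, hitRec_of_le _ (by omega)]
    · exact (hitRec_succ_le_of_mono hL hs ih hi).trans (hitRec_time_mono hL _ _)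

theorem hitRec_eq_zero (hs : ∀ i < n, s i ≤ i) {k i : ℕ} (h : k + i < n) :
    hitRec L n s k i = 0 := by
  induction k generalizing i with
  | zero => rw [hitRec, if_neg (by omega)]
  | succ k ih =>
    have hi : i < n := by omega
    have := hs i hi
    rw [hitRec_succ k hi, ih (by omega), ih (by omega), ih (by omega)]
    simp

theorem hitRec_pos (hL : 2 ≤ L) {k i : ℕ} (h : n ≤ k + i) : 0 < hitRec L n s k i := by
  have hL2 : (0 : ℝ) ≤ (L : ℝ) - 2 := by
    have : (2 : ℝ) ≤ L := by exact_mod_cast hL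
    linarith
  rcases le_or_gt n i with hi | hi
  · simp [hitRec_of_le, hi]
  induction k generalizing i with
  | zero => omega
  | succ k ih =>
    have h1 : 0 < hitRec L n s k (i + 1) := by
      rcases le_or_gt n (i + 1) with hj | hj
      · simp [hitRec_of_le, hj]
      · exact ih (by omega) hj
    rw [hitRec_succ k hi]
    have := hitRec_nonneg (n := n) (s := s) hL k (s i)
    have := hitRec_nonneg (n := n) (s := s) hL k 0
    positivity

theorem hitRec_strict (hL : 2 ≤ L) (hs : ∀ i < n, s i ≤ i) {k a b : ℕ} (hb : b < n)
    (hab : b < a) (hk : n ≤ k + a) : hitRec L n s k b < hitRec L n s k a := by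
  have hL2 : (2 : ℝ) ≤ L := by exact_mod_cast hL
  induction k generalizing a b with
  | zero =>
    rw [hitRec_of_le (i := a) _ (by omega), hitRec_eq_zero hs (by omega)]
    norm_num
  | succ k ih =>
    rcases lt_or_ge (k + 1 + b) n with h | h
    · rw [hitRec_eq_zero hs h]
      exact hitRec_pos hL hk
    · have hsb := hs b hb
      have h1 : hitRec L n s k (s b) < hitRec L n s k (b + 1) :=
        ih (by omega) (by omega) (by omega)
      have h2 : hitRec L n s k 0 ≤ hitRec L n s k (b + 1) := hitRec_mono hL hs k (by omega)
      have h3 : hitRec L n s (k + 1) b < hitRec L n s k (b + 1) := by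
        rw [hitRec_succ k hb, div_lt_iff₀ (by linarith)]
        nlinarith
      exact (h3.trans_le (hitRec_time_mono hL _ _)).trans_le
        (hitRec_mono hL hs (k + 1) (by omega))

theorem hitRec_le (hL : 2 ≤ L) (hs' : ∀ i < n, s' i ≤ i)
    (hge : ∀ i < n, s' i ≤ s i) (k i : ℕ) : hitRec L n s' k i ≤ hitRec L n s k i := by
  have hL2 : (0 : ℝ) ≤ (L : ℝ) - 2 := by
    have : (2 : ℝ) ≤ L := by exact_mod_cast hL
    linarith
  induction k generalizing i with
  | zero => simp [hitRec]
  | succ k ih =>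
    rcases le_or_gt n i with hi | hi
    · simp [hitRec_of_le, hi]
    rw [hitRec_succ k hi, hitRec_succ k hi]
    have := ih (i + 1)
    have := (hitRec_mono hL hs' k (hge i hi)).trans (ih (s i))
    have := ih 0
    gcongr

/-- A strict inequality at a state `i` with `s' i < s i`, once there is time to fall to `s i` and
climb from there to `n`. -/
theorem hitRec_lt_at (hL : 2 ≤ L) (hs' : ∀ i < n, s' i ≤ i)
    (hge : ∀ i < n, s' i ≤ s i) {i m : ℕ} (hi : i < n) (hlt : s' i < s i) (hm : n ≤ m + s i) :
    hitRec L n s' (m + 1) i < hitRec L n s (m + 1) i := by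
  have hL2 : (0 : ℝ) ≤ (L : ℝ) - 2 := by
    have : (2 : ℝ) ≤ L := by exact_mod_cast hL
    linarith
  have hL0 : (0 : ℝ) < L := by linarith
  rw [hitRec_succ m hi, hitRec_succ m hi]
  have h1 := hitRec_le hL hs' hge m (i + 1)
  have h2 : hitRec L n s' m (s' i) < hitRec L n s m (s i) :=
    (hitRec_strict hL hs' (by have := hs' i hi; omega) hlt hm).trans_le
      (hitRec_le hL hs' hge m (s i))
  have h3 := mul_le_mul_of_nonneg_left (hitRec_le hL hs' hge m 0) hL2
  exact div_lt_div_of_pos_right (by linarith) hL0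

/-- A strict inequality at state `j + t` after `m` steps gives one at `j` after `m + t` steps. -/
theorem hitRec_lt_climb (hL : 2 ≤ L) (hs' : ∀ i < n, s' i ≤ i)
    (hge : ∀ i < n, s' i ≤ s i) {m t j : ℕ} (hj : j + t < n)
    (h : hitRec L n s' m (j + t) < hitRec L n s m (j + t)) :
    hitRec L n s' (m + t) j < hitRec L n s (m + t) j := by
  have hL2 : (0 : ℝ) ≤ (L : ℝ) - 2 := by
    have : (2 : ℝ) ≤ L := by exact_mod_cast hL
    linarith
  have hL0 : (0 : ℝ) < L := by linarith
  induction t generalizing j with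
  | zero => exact h
  | succ t ih =>
    have h0 : j < n := by omega
    have h1 := ih (j := j + 1) (by omega) (by rwa [show j + 1 + t = j + (t + 1) by omega])
    have h2 := (hitRec_mono hL hs' (m + t) (hge j h0)).trans (hitRec_le hL hs' hge (m + t) (s j))
    have h3 := mul_le_mul_of_nonneg_left (hitRec_le hL hs' hge (m + t) 0) hL2
    rw [← add_assoc, hitRec_succ _ h0, hitRec_succ _ h0]
    exact div_lt_div_of_pos_right (by linarith) hL0

/-- If every differing transition drops by at least `d`, the two chains cannot be told apart from
`j` in fewer than `n - j + 1 + d` steps. -/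
theorem hitRec_eq (hs : ∀ i < n, s i ≤ i) (hs' : ∀ i < n, s' i ≤ i)
    (hge : ∀ i < n, s' i ≤ s i) {d : ℕ} (hd : ∀ i < n, s' i < s i → d ≤ i - s i) {k j : ℕ}
    (h : k + j < n + 1 + d) : hitRec L n s k j = hitRec L n s' k j := by
  induction k generalizing j with
  | zero => simp [hitRec]
  | succ k ih =>
    rcases le_or_gt n j with hj | hj
    · simp [hitRec_of_le, hj]
    have hsj := hs j hj
    have hkey : hitRec L n s k (s j) = hitRec L n s' k (s' j) := by
      rcases eq_or_lt_of_le (hge j hj) with he | hl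
      · rw [he]
        exact ih (by omega)
      -- There is no time left to climb to `n` from `s j`, let alone from the lower state.
      · have := hd j hj hl
        rw [hitRec_eq_zero hs (by omega), hitRec_eq_zero hs' (by omega)]
    rw [hitRec_succ k hj, hitRec_succ k hj, ih (by omega), hkey, ih (j := 0) (by omega)]

end

/-- Comparison of Markov chains: if `s > s'` componentwise, then with
`k₀ = n + 1 + min{i − s_i : 0 ≤ i ≤ n−1, s_i > s'_i}` the hitting probabilities from
state `0` satisfy `P_k(0) > P'_k(0)` for `k ≥ k₀` and `P_k(0) = P'_k(0)` for `k < k₀`. -/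
theorem stmt14 (L n : ℕ) (hL : 2 ≤ L) (hn : 2 ≤ n) (s s' : ℕ → ℕ)
    (hs : ∀ i < n, s i ≤ i) (hs' : ∀ i < n, s' i ≤ i)
    (hge : ∀ i < n, s' i ≤ s i) (hne : ∃ i < n, s' i < s i)
    (k₀ : ℕ)
    (hk₀ : k₀ = n + 1 + sInf {m | ∃ i, i < n ∧ s' i < s i ∧ m = i - s i}) :
    (∀ k, k₀ ≤ k →
      hitProb L n s' k ⟨0, by omega⟩ < hitProb L n s k ⟨0, by omega⟩) ∧
    (∀ k, k < k₀ →
      hitProb L n s k ⟨0, by omega⟩ = hitProb L n s' k ⟨0, by omega⟩) := by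
  set S : Set ℕ := {m | ∃ i, i < n ∧ s' i < s i ∧ m = i - s i} with hS
  have hmem : sInf S ∈ S := Nat.sInf_mem <| by
    obtain ⟨i, hi, hlt⟩ := hne
    exact ⟨i - s i, i, hi, hlt, rfl⟩
  constructor
  · intro k hk
    obtain ⟨i, hi, hlt, hmin⟩ := hmem
    have hsi := hs i hi
    obtain ⟨m, rfl⟩ : ∃ m, k = m + 1 + i := ⟨k - 1 - i, by omega⟩
    rw [hitProb_eq_hitRec hL hs, hitProb_eq_hitRec hL hs']
    refine hitRec_lt_climb hL hs' hge (by simpa using hi) ?_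
    simpa using hitRec_lt_at hL hs' hge hi hlt (by omega)
  · intro k hk
    rw [hitProb_eq_hitRec hL hs, hitProb_eq_hitRec hL hs']
    exact hitRec_eq hs hs' hge (d := sInf S)
      (fun i hi hlt => Nat.sInf_le ⟨i, hi, hlt, rfl⟩) (by simpa [← hk₀] using hk)
end

section
/- Let L ≥ 2, n ≥ 2, and let s = (s_0,…,s_{n−1}) and s' = (s'_0,…,s'_{n−1}) both satisfy 0 ≤ s_i ≤ i and 0 ≤ s'_i ≤ i, with s_i ≥ s'_i for all i and s ≠ s'. Let i* attain the minimum of { i − s_i : 0 ≤ i ≤ n−1, s_i > s'_i }. Then for all k ≥ 0 and all 0 ≤ i ≤ n: P_k(i) ≥ P'_k(i); moreover P_k(i) > P'_k(i) whenever k + i ≥ n + 1 + i* − s_{i*} and i ≤ i*; and P_k(i) = P'_k(i) whenever k + i < n + 1 + i* − s_{i*}. -/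
/-- The first-step recursion satisfied by the absorption probabilities `f k i` of the chain `X(s)`.
States are natural numbers; the values of `f k i` for `i > n` are unconstrained. -/
structure HitRec (L n : ℕ) (s : ℕ → ℕ) (f : ℕ → ℕ → ℝ) : Prop where
  top : ∀ k, f k n = 1
  time_zero : ∀ i < n, f 0 i = 0
  step : ∀ k, ∀ i < n,
    (L : ℝ) * f (k + 1) i = f k (i + 1) + f k (s i) + ((L : ℝ) - 2) * f k 0

lemma sum_ite_val_mul {m : ℕ} (a : ℕ) (ha : a < m) (c : ℝ) (g : Fin m → ℝ) :
    ∑ j : Fin m, (if (j : ℕ) = a then c else 0) * g j = c * g ⟨a, ha⟩ := by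
  rw [Finset.sum_eq_single ⟨a, ha⟩]
  · simp
  · intro b _ hb
    have : (b : ℕ) ≠ a := fun h => hb (Fin.ext h)
    simp [this]
  · simp

/-- `hitProb` extended by zero to all natural numbers as starting states. -/
noncomputable def hitFun (L n : ℕ) (s : ℕ → ℕ) (k i : ℕ) : ℝ :=
  if h : i < n + 1 then hitProb L n s k ⟨i, h⟩ else 0

lemma hitFun_hitRec (L n : ℕ) (hL : 2 ≤ L) (s : ℕ → ℕ) (hs : ∀ i < n, s i ≤ i) :
    HitRec L n s (hitFun L n s) := by
  have hL0 : (L : ℝ) ≠ 0 := by positivity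
  refine ⟨fun k => ?_, fun i hi => ?_, fun k i hi => ?_⟩
  · simp only [hitFun, Nat.lt_succ_self, dite_true]
    induction k with
    | zero => simp [hitProb, Fin.last]
    | succ k ih =>
      have hrow : ∀ j : Fin (n + 1),
          transMat L n s ⟨n, Nat.lt_succ_self n⟩ j = if (j : ℕ) = n then 1 else 0 := by
        intro j
        simp [transMat]
      unfold hitProb at ih ⊢
      rw [pow_succ', Matrix.mul_apply]
      simp only [hrow]
      rw [sum_ite_val_mul n (Nat.lt_succ_self n), ih, one_mul]
  · have h1 : i < n + 1 := by omega
    have h2 : (⟨i, h1⟩ : Fin (n + 1)) ≠ Fin.last n := by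
      intro h
      have := congrArg Fin.val h
      simp at this
      omega
    simp [hitFun, h1, hitProb, h2]
  · have h0 : 0 < n + 1 := by omega
    have h1 : i < n + 1 := by omega
    have h2 : i + 1 < n + 1 := by omega
    have h3 : s i < n + 1 := by have := hs i hi; omega
    simp only [hitFun, h0, h1, h2, h3, dite_true]
    -- The two cases of the matrix entry combine: for `s i = 0` the weight of the target `0`
    -- splits as `1/L + (L-2)/L`.
    have hrow : ∀ j : Fin (n + 1), transMat L n s ⟨i, h1⟩ j =
        (if (j : ℕ) = i + 1 then 1 / (L : ℝ) else 0) + (if (j : ℕ) = s i then 1 / (L : ℝ) else 0)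
          + (if (j : ℕ) = 0 then ((L : ℝ) - 2) / L else 0) := by
      intro j
      have hin : i ≠ n := by omega
      simp only [transMat, hin, if_false]
      rcases Nat.eq_zero_or_pos (s i) with h | h
      · by_cases hj : (j : ℕ) = 0
        · simp [h, hj]
          field_simp
          ring
        · simp [h, hj]
      · simp [h]
    unfold hitProb
    rw [pow_succ', Matrix.mul_apply]
    simp only [hrow, add_mul, Finset.sum_add_distrib]
    rw [sum_ite_val_mul _ h2, sum_ite_val_mul _ h3, sum_ite_val_mul _ h0]
    field_simp

namespace HitRec

variable {L n : ℕ} {s : ℕ → ℕ} {f : ℕ → ℕ → ℝ}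

lemma nonneg (H : HitRec L n s f) (hL : 2 ≤ L) (hs : ∀ i < n, s i ≤ i) :
    ∀ k, ∀ i ≤ n, 0 ≤ f k i := by
  have hL' : (2 : ℝ) ≤ L := by exact_mod_cast hL
  intro k
  induction k with
  | zero =>
    intro i hi
    rcases hi.lt_or_eq with h | rfl
    · rw [H.time_zero i h]
    · rw [H.top]; exact zero_le_one
  | succ k ih =>
    intro i hi
    rcases hi.lt_or_eq with h | rfl
    · have h1 := H.step k i h
      have h2 := ih (i + 1) h
      have h3 := ih (s i) ((hs i h).trans hi)
      have h4 := mul_nonneg (sub_nonneg.2 hL') (ih 0 (Nat.zero_le _))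
      have h5 : 0 ≤ (L : ℝ) * f (k + 1) i := by linarith
      exact nonneg_of_mul_nonneg_right h5 (by linarith)
    · rw [H.top]; exact zero_le_one

/-- The chain moves up by at most one per step. -/
lemma eq_zero (H : HitRec L n s f) (hL : 2 ≤ L) (hs : ∀ i < n, s i ≤ i) :
    ∀ k i, k + i < n → f k i = 0 := by
  have hL0 : (L : ℝ) ≠ 0 := by positivity
  intro k
  induction k with
  | zero => intro i hi; exact H.time_zero i (by omega)
  | succ k ih =>
    intro i hi
    have h1 := H.step k i (by omega)
    have h2 := hs i (by omega)
    rw [ih (i + 1) (by omega), ih (s i) (by omega), ih 0 (by omega)] at h1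
    simpa [hL0] using h1

lemma pos (H : HitRec L n s f) (hL : 2 ≤ L) (hs : ∀ i < n, s i ≤ i) :
    ∀ k, ∀ i ≤ n, n ≤ k + i → 0 < f k i := by
  have hL' : (2 : ℝ) ≤ L := by exact_mod_cast hL
  intro k
  induction k with
  | zero =>
    intro i hi hk
    obtain rfl : i = n := by omega
    rw [H.top]; exact zero_lt_one
  | succ k ih =>
    intro i hi hk
    rcases hi.lt_or_eq with h | rfl
    · have h1 := H.step k i h
      have h2 := ih (i + 1) h (by omega)
      have h3 := H.nonneg hL hs k (s i) ((hs i h).trans hi)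
      have h4 := mul_nonneg (sub_nonneg.2 hL') (H.nonneg hL hs k 0 (Nat.zero_le _))
      have h5 : 0 < (L : ℝ) * f (k + 1) i := by linarith
      exact pos_of_mul_pos_right h5 (by linarith)
    · rw [H.top]; exact zero_lt_one

lemma mono_time (H : HitRec L n s f) (hL : 2 ≤ L) (hs : ∀ i < n, s i ≤ i) :
    ∀ k, ∀ i ≤ n, f k i ≤ f (k + 1) i := by
  have hL' : (2 : ℝ) ≤ L := by exact_mod_cast hL
  intro k
  induction k with
  | zero =>
    intro i hi
    rcases hi.lt_or_eq with h | rfl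
    · rw [H.time_zero i h]; exact H.nonneg hL hs _ i hi
    · rw [H.top, H.top]
  | succ k ih =>
    intro i hi
    rcases hi.lt_or_eq with h | rfl
    · have h1 := H.step k i h
      have h1' := H.step (k + 1) i h
      have h2 := ih (i + 1) h
      have h3 := ih (s i) ((hs i h).trans hi)
      have h4 := mul_le_mul_of_nonneg_left (ih 0 (Nat.zero_le _)) (sub_nonneg.2 hL')
      exact le_of_mul_le_mul_left (by linarith) (show (0 : ℝ) < L by linarith)
    · rw [H.top, H.top]

/-- The one-step increment in the starting state, expressed through the increment in time. -/
lemma succ_sub (H : HitRec L n s f) (k i : ℕ) (hi : i < n) :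
    f k (i + 1) - f k i = L * (f (k + 1) i - f k i) + (f k i - f k (s i))
      + ((L : ℝ) - 2) * (f k i - f k 0) := by
  have := H.step k i hi
  linear_combination -this

lemma mono (H : HitRec L n s f) (hL : 2 ≤ L) (hs : ∀ i < n, s i ≤ i) (k : ℕ) :
    ∀ i ≤ n, ∀ j ≤ i, f k j ≤ f k i := by
  have hL' : (2 : ℝ) ≤ L := by exact_mod_cast hL
  intro i
  induction i with
  | zero => intro _ j hj; obtain rfl : j = 0 := by omega
            exact le_rfl
  | succ i ih =>
    intro hi j hj
    rcases hj.lt_or_eq with h | rfl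
    · have ih' := ih (by omega)
      have h1 := H.succ_sub k i hi
      have h2 := ih' (s i) (hs i hi)
      have h3 := mul_nonneg (sub_nonneg.2 hL') (sub_nonneg.2 (ih' 0 (Nat.zero_le _)))
      have h4 := mul_nonneg (show (0 : ℝ) ≤ L by linarith)
        (sub_nonneg.2 (H.mono_time hL hs k i (by omega)))
      have h5 := ih' j (by omega)
      linarith
    · exact le_rfl

/-- At a state with a self-loop, absorption at exactly time `k + 1` has positive probability as
soon as `k + 1` steps suffice to reach `n`: wait at `i`, then climb. -/
lemma lt_time_of_fixed (H : HitRec L n s f) (hL : 2 ≤ L) (hs : ∀ i < n, s i ≤ i)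
    (i : ℕ) (hi : i < n) (hfix : s i = i) : ∀ k, n ≤ k + 1 + i → f k i < f (k + 1) i := by
  have hL' : (2 : ℝ) ≤ L := by exact_mod_cast hL
  intro k
  induction k with
  | zero =>
    intro hk
    rw [H.time_zero i hi]
    exact H.pos hL hs _ i hi.le (by omega)
  | succ k ih =>
    intro hk
    by_cases h : k + 1 + i < n
    · rw [H.eq_zero hL hs _ i h]
      exact H.pos hL hs _ i hi.le hk
    · have h1 := H.step k i hi
      have h1' := H.step (k + 1) i hi
      rw [hfix] at h1 h1'
      have h2 := H.mono_time hL hs k (i + 1) hi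
      have h3 := ih (by omega)
      have h4 := mul_le_mul_of_nonneg_left (H.mono_time hL hs k 0 (Nat.zero_le _))
        (sub_nonneg.2 hL')
      exact lt_of_mul_lt_mul_left (a := (L : ℝ)) (by linarith) (by linarith)

lemma lt_succ (H : HitRec L n s f) (hL : 2 ≤ L) (hs : ∀ i < n, s i ≤ i) (k : ℕ) :
    ∀ i < n, n ≤ k + i + 1 → f k i < f k (i + 1) := by
  have hL' : (2 : ℝ) ≤ L := by exact_mod_cast hL
  intro i
  induction i with
  | zero =>
    intro hi hk
    have h0 : s 0 = 0 := Nat.le_zero.1 (hs 0 hi)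
    have h1 := H.succ_sub k 0 hi
    rw [h0] at h1
    have h2 := mul_pos (show (0 : ℝ) < L by linarith)
      (sub_pos.2 (H.lt_time_of_fixed hL hs 0 hi h0 k (by omega)))
    simp only [sub_self, mul_zero, add_zero] at h1
    linarith
  | succ i ih =>
    intro hi hk
    have h1 := H.succ_sub k (i + 1) hi
    have h3 := mul_nonneg (sub_nonneg.2 hL')
      (sub_nonneg.2 (H.mono hL hs k (i + 1) hi.le 0 (Nat.zero_le _)))
    rcases (hs (i + 1) hi).lt_or_eq with h | h
    · have h4 := mul_nonneg (show (0 : ℝ) ≤ L by linarith)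
        (sub_nonneg.2 (H.mono_time hL hs k (i + 1) hi.le))
      by_cases hk' : k + (i + 1) < n
      · rw [H.eq_zero hL hs k (i + 1) hk']
        exact H.pos hL hs k _ hi (by omega)
      · have h5 := ih (by omega) (by omega)
        have h6 := H.mono hL hs k i (by omega) (s (i + 1)) (by omega)
        linarith
    · have h4 := mul_pos (show (0 : ℝ) < L by linarith)
        (sub_pos.2 (H.lt_time_of_fixed hL hs (i + 1) hi h k (by omega)))
      rw [h] at h1
      linarith

lemma strictMono (H : HitRec L n s f) (hL : 2 ≤ L) (hs : ∀ i < n, s i ≤ i) (k i j : ℕ)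
    (hi : i ≤ n) (hj : j < i) (hk : n ≤ k + i) : f k j < f k i := by
  obtain ⟨m, rfl⟩ : ∃ m, i = m + 1 := ⟨i - 1, by omega⟩
  exact (H.mono hL hs k m (by omega) j (by omega)).trans_lt
    (H.lt_succ hL hs k m (by omega) (by omega))

variable {s' : ℕ → ℕ} {f' : ℕ → ℕ → ℝ}

lemma le_of_le (H : HitRec L n s f) (H' : HitRec L n s' f') (hL : 2 ≤ L)
    (hs : ∀ i < n, s i ≤ i) (hs' : ∀ i < n, s' i ≤ i) (hge : ∀ i < n, s' i ≤ s i) :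
    ∀ k, ∀ i ≤ n, f' k i ≤ f k i := by
  have hL' : (2 : ℝ) ≤ L := by exact_mod_cast hL
  intro k
  induction k with
  | zero =>
    intro i hi
    rcases hi.lt_or_eq with h | rfl
    · rw [H.time_zero i h, H'.time_zero i h]
    · rw [H.top, H'.top]
  | succ k ih =>
    intro i hi
    rcases hi.lt_or_eq with h | rfl
    · have h1 := H.step k i h
      have h1' := H'.step k i h
      have h2 := ih (i + 1) h
      have hsi : s i ≤ n := (hs i h).trans hi
      have h3 := ih (s i) hsi
      have h3' := H'.mono hL hs' k (s i) hsi (s' i) (hge i h)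
      have h4 := mul_le_mul_of_nonneg_left (ih 0 (Nat.zero_le _)) (sub_nonneg.2 hL')
      exact le_of_mul_le_mul_left (by linarith) (show (0 : ℝ) < L by linarith)
    · rw [H.top, H'.top]

lemma eq_of_lt (H : HitRec L n s f) (H' : HitRec L n s' f') (hL : 2 ≤ L)
    (hs : ∀ i < n, s i ≤ i) (hs' : ∀ i < n, s' i ≤ i) (hge : ∀ i < n, s' i ≤ s i)
    (d : ℕ) (hd : ∀ i < n, s' i < s i → d ≤ i - s i) :
    ∀ k, ∀ i ≤ n, k + i < n + 1 + d → f k i = f' k i := by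
  have hL0 : (L : ℝ) ≠ 0 := by positivity
  intro k
  induction k with
  | zero =>
    intro i hi _
    rcases hi.lt_or_eq with h | rfl
    · rw [H.time_zero i h, H'.time_zero i h]
    · rw [H.top, H'.top]
  | succ k ih =>
    intro i hi hk
    rcases hi.lt_or_eq with h | rfl
    · have h1 := H.step k i h
      have h1' := H'.step k i h
      have hsi := hs i h
      have h3 : f k (s i) = f' k (s' i) := by
        rcases (hge i h).lt_or_eq with hlt | heq
        · have := hd i h hlt
          rw [H.eq_zero hL hs k _ (by omega), H'.eq_zero hL hs' k _ (by omega)]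
        · rw [heq]
          exact ih (s i) (by omega) (by omega)
      rw [ih (i + 1) h (by omega), h3, ih 0 (Nat.zero_le _) (by omega), ← h1'] at h1
      exact mul_left_cancel₀ hL0 h1
    · rw [H.top, H'.top]

lemma lt_of_ge (H : HitRec L n s f) (H' : HitRec L n s' f') (hL : 2 ≤ L)
    (hs : ∀ i < n, s i ≤ i) (hs' : ∀ i < n, s' i ≤ i) (hge : ∀ i < n, s' i ≤ s i)
    (m : ℕ) (hm : m < n) (hlt : s' m < s m) :
    ∀ k, ∀ i ≤ m, n + 1 + m - s m ≤ k + i → f' k i < f k i := by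
  have hL' : (2 : ℝ) ≤ L := by exact_mod_cast hL
  have hle := H.le_of_le H' hL hs hs' hge
  have hsm := hs m hm
  intro k
  induction k with
  | zero => intro i hi hk; omega
  | succ k ih =>
    intro i hi hk
    have h : i < n := by omega
    have h1 := H.step k i h
    have h1' := H'.step k i h
    have hsi : s i ≤ n := (hs i h).trans h.le
    have h3 := hle k (s i) hsi
    have h4 := mul_le_mul_of_nonneg_left (hle k 0 (Nat.zero_le _)) (sub_nonneg.2 hL')
    rcases hi.lt_or_eq with him | rfl
    · have h2 := ih (i + 1) him (by omega)
      have h3' := H'.mono hL hs' k (s i) hsi (s' i) (hge i h)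
      exact lt_of_mul_lt_mul_left (a := (L : ℝ)) (by linarith) (by linarith)
    · have h2 := hle k (i + 1) h
      have h3' := H'.strictMono hL hs' k (s i) (s' i) hsi hlt (by omega)
      exact lt_of_mul_lt_mul_left (a := (L : ℝ)) (by linarith) (by linarith)

end HitRec

/-- Detailed comparison of Markov chains: if `s ≥ s'` componentwise with some strict
inequality, and `i*` attains `min{i − s_i : s_i > s'_i}`, then `P_k(i) ≥ P'_k(i)` always,
with strict inequality whenever `k + i ≥ n + 1 + i* − s_{i*}` and `i ≤ i*`, and equality
whenever `k + i < n + 1 + i* − s_{i*}`. -/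
theorem stmt15 (L n : ℕ) (hL : 2 ≤ L) (hn : 2 ≤ n) (s s' : ℕ → ℕ)
    (hs : ∀ i < n, s i ≤ i) (hs' : ∀ i < n, s' i ≤ i)
    (hge : ∀ i < n, s' i ≤ s i) (hne : ∃ i < n, s' i < s i)
    (istar : ℕ) (histar : istar < n) (hstrict : s' istar < s istar)
    (hmin : ∀ i < n, s' i < s i → istar - s istar ≤ i - s i) :
    ∀ (k : ℕ) (i : Fin (n + 1)),
      hitProb L n s' k i ≤ hitProb L n s k i ∧
      (n + 1 + istar - s istar ≤ k + (i : ℕ) → (i : ℕ) ≤ istar →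
        hitProb L n s' k i < hitProb L n s k i) ∧
      (k + (i : ℕ) < n + 1 + istar - s istar →
        hitProb L n s k i = hitProb L n s' k i) := by
  have H := hitFun_hitRec L n hL s hs
  have H' := hitFun_hitRec L n hL s' hs'
  intro k i
  have hi : (i : ℕ) ≤ n := Nat.lt_succ_iff.1 i.2
  have e : ∀ t, hitFun L n t k i = hitProb L n t k i := by
    intro t
    simp only [hitFun, i.2, dite_true]
  rw [← e s, ← e s']
  have hsm := hs istar histar
  exact ⟨H.le_of_le H' hL hs hs' hge k i hi,
    fun hk him => H.lt_of_ge H' hL hs hs' hge istar histar hstrict k i him hk,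
    fun hk => H.eq_of_lt H' hL hs hs' hge (istar - s istar) hmin k i hi (by omega)⟩
end
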